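/- If Λ² = ζ², the limiting loss density f(x) = (ζ/|Λ|)·φ((ζ·Φ⁻¹(x) − Σ·Φ⁻¹(p))/|Λ|)/φ(Φ⁻¹(x)) is monotone on (0,1): it is strictly increasing if p > 1/2, strictly decreasing if p < 1/2, and constant if p = 1/2. -/

import Mathlib

/-!
When `|Λ| = ζ`, the density is the likelihood ratio of `N(m, 1)` against `N(0, 1)` with
`m = Sg * Φ⁻¹ p / ζ`, evaluated at the quantile `Φ⁻¹ x`. Gaussians of equal variance have a
monotone likelihood ratio: it is an exponential whose slope has the sign of the difference of
the means. As `Φ⁻¹` is strictly increasing and `Φ⁻¹ (1 / 2) = 0` by symmetry, the sign of `m` is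
that of `p - 1 / 2`.
-/

open MeasureTheory ProbabilityTheory Real Filter Set

/-- The density of the standard normal distribution. -/
noncomputable def stdPdf (y : ℝ) : ℝ := Real.exp (-y ^ 2 / 2) / Real.sqrt (2 * Real.pi)

/-- The cumulative distribution function `Φ` of the standard normal distribution. -/
noncomputable def stdCdf (x : ℝ) : ℝ := ∫ y in Set.Iic x, stdPdf y

/-- The inverse `Φ⁻¹` of the standard normal cumulative distribution function: since `stdCdf`
is injective, `stdCdfInv` is the genuine inverse of `Φ` on `(0,1)`. -/
noncomputable def stdCdfInv : ℝ → ℝ := Function.invFun stdCdf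

open scoped NNReal

section Cdf

variable (μ : Measure ℝ) [IsProbabilityMeasure μ]

lemma strictMono_cdf [μ.IsOpenPosMeasure] : StrictMono (cdf μ) := by
  intro a b hab
  have hpos : 0 < (cdf μ).measure (Ioc a b) := by
    rw [measure_cdf]
    exact ((Measure.measure_Ioo_pos μ).mpr hab).trans_le (measure_mono Ioo_subset_Ioc_self)
  rwa [StieltjesFunction.measure_Ioc, ENNReal.ofReal_pos, sub_pos] at hpos

lemma continuous_cdf [NullSingletonClass μ] : Continuous (cdf μ) := by
  refine continuous_iff_continuousAt.mpr fun x ↦ ?_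
  have hjump : (cdf μ).measure {x} = 0 := by rw [measure_cdf, measure_singleton]
  rw [StieltjesFunction.measure_singleton, ENNReal.ofReal_eq_zero, sub_nonpos] at hjump
  rw [(monotone_cdf μ).continuousAt_iff_leftLim_eq_rightLim, StieltjesFunction.rightLim_eq]
  exact ((monotone_cdf μ).leftLim_le le_rfl).antisymm hjump

lemma Ioo_subset_range_cdf [NullSingletonClass μ] : Ioo 0 1 ⊆ range (cdf μ) := by
  intro p hp
  obtain ⟨a, ha⟩ := ((tendsto_cdf_atBot μ).eventually (gt_mem_nhds hp.1)).exists
  obtain ⟨b, hb⟩ := ((tendsto_cdf_atTop μ).eventually (lt_mem_nhds hp.2)).exists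
  exact mem_range_of_exists_le_of_exists_ge (continuous_cdf μ) ⟨a, ha.le⟩ ⟨b, hb.le⟩

lemma cdf_neg [NullSingletonClass μ] [μ.IsNegInvariant] (x : ℝ) :
    cdf μ (-x) = 1 - cdf μ x := by
  calc cdf μ (-x) = μ.real (Iic (-x)) := cdf_eq_real μ (-x)
    _ = μ.real (Ici x) := by
      rw [measureReal_def, ← Measure.measure_neg μ, neg_Iic, neg_neg, ← measureReal_def]
    _ = μ.real (Iic x)ᶜ := by rw [compl_Iic, measureReal_congr Ioi_ae_eq_Ici]
    _ = 1 - cdf μ x := by rw [probReal_compl_eq_one_sub measurableSet_Iic, cdf_eq_real]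

lemma cdf_zero_eq_one_half [NullSingletonClass μ] [μ.IsNegInvariant] : cdf μ 0 = 1 / 2 := by
  have h := cdf_neg μ 0
  rw [neg_zero] at h
  linarith

end Cdf

lemma strictMonoOn_invFun_range {α β : Type*} [LinearOrder α] [Nonempty α] [Preorder β]
    {f : α → β} (hf : StrictMono f) : StrictMonoOn (Function.invFun f) (range f) := by
  rintro _ ⟨a, rfl⟩ _ ⟨b, rfl⟩ hab
  simpa only [Function.leftInverse_invFun hf.injective _] using hf.lt_iff_lt.mp hab

section Gaussian

lemma isOpenPosMeasure_gaussianReal (μ : ℝ) {v : ℝ≥0} (hv : v ≠ 0) :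
    (gaussianReal μ v).IsOpenPosMeasure :=
  (gaussianReal_absolutelyContinuous' μ hv).isOpenPosMeasure

instance isNegInvariant_gaussianReal_zero (v : ℝ≥0) : (gaussianReal 0 v).IsNegInvariant where
  neg_eq_self := gaussianReal_map_neg.trans (by rw [neg_zero])

lemma cdf_gaussianReal_eq_integral (μ : ℝ) {v : ℝ≥0} (hv : v ≠ 0) (x : ℝ) :
    cdf (gaussianReal μ v) x = ∫ y in Iic x, gaussianPDFReal μ v y := by
  rw [cdf_eq_real, measureReal_def, gaussianReal_apply_eq_integral μ hv,
    ENNReal.toReal_ofReal (integral_nonneg fun _ ↦ gaussianPDFReal_nonneg μ v _)]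

variable {μ ν : ℝ} {v : ℝ≥0}

lemma gaussianPDFReal_div_gaussianPDFReal (hv : v ≠ 0) (x : ℝ) :
    gaussianPDFReal μ v x / gaussianPDFReal ν v x =
      exp ((μ - ν) / v * (x - (μ + ν) / 2)) := by
  rw [gaussianPDFReal, gaussianPDFReal, mul_div_mul_left _ _ (by positivity), ← exp_sub]
  congr 1
  field_simp
  ring

lemma strictMono_gaussianPDFReal_div (hv : v ≠ 0) (h : ν < μ) :
    StrictMono fun x ↦ gaussianPDFReal μ v x / gaussianPDFReal ν v x := by
  have hslope : 0 < (μ - ν) / v := div_pos (sub_pos.mpr h) (by positivity)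
  intro x y hxy
  simp only [gaussianPDFReal_div_gaussianPDFReal hv]
  exact exp_strictMono (mul_lt_mul_of_pos_left (sub_lt_sub_right hxy _) hslope)

lemma strictAnti_gaussianPDFReal_div (hv : v ≠ 0) (h : μ < ν) :
    StrictAnti fun x ↦ gaussianPDFReal μ v x / gaussianPDFReal ν v x := by
  intro x y hxy
  simpa only [inv_div] using
    inv_strictAnti₀ (div_pos (gaussianPDFReal_pos ν v x hv) (gaussianPDFReal_pos μ v x hv))
      (strictMono_gaussianPDFReal_div hv h hxy)

end Gaussian

section StandardNormal

lemma stdPdf_eq_gaussianPDFReal : stdPdf = gaussianPDFReal 0 1 := by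
  funext y
  simp only [stdPdf, gaussianPDFReal, NNReal.coe_one, mul_one, sub_zero]
  ring

lemma stdCdf_eq_cdf_gaussianReal : stdCdf = cdf (gaussianReal 0 1) := by
  funext x
  rw [stdCdf, stdPdf_eq_gaussianPDFReal, cdf_gaussianReal_eq_integral 0 one_ne_zero]

lemma strictMono_stdCdf : StrictMono stdCdf := by
  have := isOpenPosMeasure_gaussianReal 0 one_ne_zero
  exact stdCdf_eq_cdf_gaussianReal ▸ strictMono_cdf (gaussianReal 0 1)

lemma Ioo_subset_range_stdCdf : Ioo 0 1 ⊆ range stdCdf := by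
  have := nullSingletonClass_gaussianReal (μ := 0) one_ne_zero
  exact stdCdf_eq_cdf_gaussianReal ▸ Ioo_subset_range_cdf (gaussianReal 0 1)

lemma stdCdf_zero : stdCdf 0 = 1 / 2 := by
  have := nullSingletonClass_gaussianReal (μ := 0) one_ne_zero
  exact stdCdf_eq_cdf_gaussianReal ▸ cdf_zero_eq_one_half (gaussianReal 0 1)

lemma strictMonoOn_stdCdfInv : StrictMonoOn stdCdfInv (Ioo 0 1) :=
  (strictMonoOn_invFun_range strictMono_stdCdf).mono Ioo_subset_range_stdCdf

lemma stdCdfInv_one_half : stdCdfInv (1 / 2) = 0 := by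
  rw [← stdCdf_zero]
  exact Function.leftInverse_invFun strictMono_stdCdf.injective 0

lemma stdCdfInv_pos_iff {p : ℝ} (hp : p ∈ Ioo 0 1) : 0 < stdCdfInv p ↔ 1 / 2 < p := by
  rw [← stdCdfInv_one_half]
  exact strictMonoOn_stdCdfInv.lt_iff_lt (by norm_num) hp

lemma stdCdfInv_neg_iff {p : ℝ} (hp : p ∈ Ioo 0 1) : stdCdfInv p < 0 ↔ p < 1 / 2 := by
  rw [← stdCdfInv_one_half]
  exact strictMonoOn_stdCdfInv.lt_iff_lt hp (by norm_num)

lemma stdPdf_mul_sub_div {a : ℝ} (ha : a ≠ 0) (b x : ℝ) :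
    stdPdf ((a * x - b) / a) = gaussianPDFReal (b / a) 1 x := by
  rw [stdPdf_eq_gaussianPDFReal, sub_div, mul_div_cancel_left₀ x ha, gaussianPDFReal_sub, zero_add]

end StandardNormal

/-- if `Λ² = ζ²`, the limiting loss density is monotone on `(0,1)`: strictly
increasing if `p > 1/2`, strictly decreasing if `p < 1/2`, and constant if `p = 1/2`. -/
theorem limiting_density_monotone
    (Sg ζ Λ p : ℝ)
    (hSg : 0 < Sg) (hζ : 0 < ζ) (hΛ : Λ ≠ 0) (hp : p ∈ Set.Ioo (0 : ℝ) 1)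
    (f : ℝ → ℝ)
    (hf : ∀ x ∈ Set.Ioo (0 : ℝ) 1,
      f x = (ζ / |Λ|) * stdPdf ((ζ * stdCdfInv x - Sg * stdCdfInv p) / |Λ|)
              / stdPdf (stdCdfInv x))
    (hcase : Λ ^ 2 = ζ ^ 2) :
    (1 / 2 < p → StrictMonoOn f (Set.Ioo 0 1)) ∧
    (p < 1 / 2 → StrictAntiOn f (Set.Ioo 0 1)) ∧
    (p = 1 / 2 → ∀ x ∈ Set.Ioo (0 : ℝ) 1, ∀ y ∈ Set.Ioo (0 : ℝ) 1, f x = f y) := by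
  have hΛζ : |Λ| = ζ := by rw [(sq_eq_sq_iff_abs_eq_abs Λ ζ).mp hcase, abs_of_pos hζ]
  set m := Sg * stdCdfInv p / ζ with hm
  have hf_ratio : EqOn ((fun t ↦ gaussianPDFReal m 1 t / gaussianPDFReal 0 1 t) ∘ stdCdfInv) f
      (Ioo 0 1) := by
    intro x hx
    rw [hf x hx, hΛζ, div_self hζ.ne', one_mul, stdPdf_mul_sub_div hζ.ne',
      stdPdf_eq_gaussianPDFReal, Function.comp_apply]
  refine ⟨fun hp_gt ↦ ?_, fun hp_lt ↦ ?_, fun hp_eq x hx y hy ↦ ?_⟩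
  · have hm_pos : 0 < m := div_pos (mul_pos hSg ((stdCdfInv_pos_iff hp).mpr hp_gt)) hζ
    exact ((strictMono_gaussianPDFReal_div one_ne_zero hm_pos).comp_strictMonoOn
      strictMonoOn_stdCdfInv).congr hf_ratio
  · have hm_neg : m < 0 :=
      div_neg_of_neg_of_pos (mul_neg_of_pos_of_neg hSg ((stdCdfInv_neg_iff hp).mpr hp_lt)) hζ
    exact ((strictAnti_gaussianPDFReal_div one_ne_zero hm_neg).comp_strictMonoOn
      strictMonoOn_stdCdfInv).congr hf_ratio
  · have hm_zero : m = 0 := by rw [hm, hp_eq, stdCdfInv_one_half, mul_zero, zero_div]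
    simp only [← hf_ratio hx, ← hf_ratio hy, hm_zero, Function.comp_apply,
      div_self (gaussianPDFReal_pos 0 1 _ one_ne_zero).ne']
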